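/- Theorem 2.5: Let 𝕄 be an infinite subset of ℕ, let Ω ⊆ ℂⁿ be an open convex set, let (K_m)_{m≥1} be a sequence of compact convex subsets of ℂⁿ each disjoint from Ω, let ζ ∈ Ω be fixed, and let (N_j)_{j≥0} be any enumeration of ℕⁿ. Then there exists a holomorphic function f on Ω such that: for every compact convex set K ⊆ ℂⁿ which is either disjoint from the closure of Ω or equal to K_m for some m ≥ 1, and for every holomorphic polynomial P on ℂⁿ, there exists a sequence (λ_N)_{N≥1} with λ_N ∈ 𝕄 such that S_{λ_N}(f,ζ) → P uniformly on K and S_{λ_N}(f,ζ) → f uniformly on each compact subset of Ω, as N → ∞. The set of all such functions f is a dense G_δ subset of O(Ω) with the topology of uniform convergence on compacta. -/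

import Mathlib

open Set Filter Topology

noncomputable section

/-- Evaluation of a multivariate polynomial as a function on `ℂⁿ = Fin n → ℂ`. -/
def mvEval {n : ℕ} (p : MvPolynomial (Fin n) ℂ) : (Fin n → ℂ) → ℂ :=
  fun z => MvPolynomial.eval z p

/-- The polynomially convex hull of a set in `ℂⁿ`. -/
def polyHull {n : ℕ} (K : Set (Fin n → ℂ)) : Set (Fin n → ℂ) :=
  {z | ∀ p : MvPolynomial (Fin n) ℂ, ‖mvEval p z‖ ≤ sSup ((fun w => ‖mvEval p w‖) '' K)}

/-- A set in `ℂⁿ` is polynomially convex if it equals its polynomially convex hull. -/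
def IsPolyConvex {n : ℕ} (K : Set (Fin n → ℂ)) : Prop := polyHull K = K

/-- The polynomially convex hull of a subset of `ℂ`. -/
def polyHull1 (F : Set ℂ) : Set ℂ :=
  {z | ∀ p : Polynomial ℂ, ‖p.eval z‖ ≤ sSup ((fun w => ‖p.eval w‖) '' F)}

/-- A subset of `ℂ` is polynomially convex if it equals its polynomially convex hull. -/
def IsPolyConvex1 (F : Set ℂ) : Prop := polyHull1 F = F

/-- Partial derivative in the `i`-th coordinate direction. -/
def pd {n : ℕ} (i : Fin n) (f : (Fin n → ℂ) → ℂ) : (Fin n → ℂ) → ℂ :=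
  fun z => fderiv ℂ f z (Pi.single i 1)

/-- Iterated partial derivative `D^ℓ = ∂^{ℓ₁+⋯+ℓₙ}/∂z₁^{ℓ₁}⋯∂zₙ^{ℓₙ}`. -/
def Dml {n : ℕ} (ℓ : Fin n → ℕ) (f : (Fin n → ℂ) → ℂ) : (Fin n → ℂ) → ℂ :=
  (List.finRange n).foldr (fun i g => (pd i)^[ℓ i] g) f

/-- Partial sums `S_λ` of a Taylor-type series around `ζ`, with coefficients computed from a
given family `g` of (extended) partial derivatives: the coefficient of the monomial
`(z-ζ)^{N_j}` is `g (N_j) ζ / (N_{j,1}! ⋯ N_{j,n}!)`. -/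
def pSumExt {n : ℕ} (Nj : ℕ → Fin n → ℕ) (g : (Fin n → ℕ) → (Fin n → ℂ) → ℂ)
    (ζ : Fin n → ℂ) (lam : ℕ) : (Fin n → ℂ) → ℂ :=
  fun z => ∑ j ∈ Finset.range (lam + 1),
    (((∏ i, Nat.factorial (Nj j i) : ℕ) : ℂ))⁻¹ * g (Nj j) ζ * ∏ i, (z i - ζ i) ^ (Nj j i)

/-- Partial sums `S_λ(f,ζ)` of the Taylor development of `f` around `ζ`. -/
def pSum {n : ℕ} (Nj : ℕ → Fin n → ℕ) (f : (Fin n → ℂ) → ℂ)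
    (ζ : Fin n → ℂ) (lam : ℕ) : (Fin n → ℂ) → ℂ :=
  pSumExt Nj (fun ℓ => Dml ℓ f) ζ lam

/-- The space `O(Ω)` of holomorphic functions on `Ω`. -/
def Ospace (n : ℕ) (Ω : Set (Fin n → ℂ)) : Type :=
  {f : (Fin n → ℂ) → ℂ // DifferentiableOn ℂ f Ω}

/-- Topology of uniform convergence on compact subsets of `Ω` on `O(Ω)` (the compact-open
topology induced via restriction to `Ω`). -/
instance (n : ℕ) (Ω : Set (Fin n → ℂ)) : TopologicalSpace (Ospace n Ω) :=
  TopologicalSpace.induced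
    (fun f : Ospace n Ω =>
      (⟨Ω.restrict f.1, continuousOn_iff_continuous_restrict.mp f.2.continuousOn⟩ : C(Ω, ℂ)))
    inferInstance

/-- Membership in `A^∞(Ω)`: `f` is holomorphic on `Ω` and each partial derivative `D^ℓ f`
extends continuously to the closure of `Ω`. -/
def AinfMem (n : ℕ) (Ω : Set (Fin n → ℂ)) (f : (Fin n → ℂ) → ℂ) : Prop :=
  DifferentiableOn ℂ f Ω ∧
    ∀ ℓ : Fin n → ℕ, ∃ g : (Fin n → ℂ) → ℂ,
      ContinuousOn g (closure Ω) ∧ Set.EqOn g (Dml ℓ f) Ω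

/-- The space `A^∞(Ω)`. -/
def AinfSpace (n : ℕ) (Ω : Set (Fin n → ℂ)) : Type :=
  {f : (Fin n → ℂ) → ℂ // AinfMem n Ω f}

/-- The chosen continuous extension of `D^ℓ f` to the closure of `Ω`, for `f ∈ A^∞(Ω)`.
(Its restriction to the closure of `Ω` is uniquely determined.) -/
def AinfExt {n : ℕ} {Ω : Set (Fin n → ℂ)} (f : AinfSpace n Ω) (ℓ : Fin n → ℕ) :
    (Fin n → ℂ) → ℂ :=
  Classical.choose (f.2.2 ℓ)

lemma AinfExt_continuousOn {n : ℕ} {Ω : Set (Fin n → ℂ)} (f : AinfSpace n Ω) (ℓ : Fin n → ℕ) :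
    ContinuousOn (AinfExt f ℓ) (closure Ω) :=
  (Classical.choose_spec (f.2.2 ℓ)).1

lemma AinfExt_eqOn {n : ℕ} {Ω : Set (Fin n → ℂ)} (f : AinfSpace n Ω) (ℓ : Fin n → ℕ) :
    Set.EqOn (AinfExt f ℓ) (Dml ℓ f.1) Ω :=
  (Classical.choose_spec (f.2.2 ℓ)).2

/-- Topology on `A^∞(Ω)`: uniform convergence of every partial derivative on every compact
subset of the closure of `Ω`. -/
instance (n : ℕ) (Ω : Set (Fin n → ℂ)) : TopologicalSpace (AinfSpace n Ω) :=
  TopologicalSpace.induced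
    (fun f : AinfSpace n Ω => fun ℓ : Fin n → ℕ =>
      (⟨(closure Ω).restrict (AinfExt f ℓ),
        continuousOn_iff_continuous_restrict.mp (AinfExt_continuousOn f ℓ)⟩ :
          C(closure Ω, ℂ)))
    inferInstance

/-- A smooth compact curve in `ℂⁿ`: the image of an injective `C^∞` map with
nowhere-vanishing derivative, defined on a compact interval (an arc) or on the
circle (a closed curve, modelled by a 1-periodic map). -/
def IsSmoothCompactCurve {n : ℕ} (K : Set (Fin n → ℂ)) : Prop :=
  ∃ γ : ℝ → (Fin n → ℂ), ContDiff ℝ (⊤ : ℕ∞) γ ∧ (∀ t, deriv γ t ≠ 0) ∧ K = γ '' Set.Icc 0 1 ∧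
    (Set.InjOn γ (Set.Icc 0 1) ∨ (Function.Periodic γ 1 ∧ Set.InjOn γ (Set.Ico 0 1)))

/-- A disjoint union of finitely many smooth compact curves. -/
def IsFiniteUnionOfSmoothCurves {n : ℕ} (K : Set (Fin n → ℂ)) : Prop :=
  ∃ (m : ℕ) (C : Fin m → Set (Fin n → ℂ)),
    (∀ i, IsSmoothCompactCurve (C i)) ∧ Pairwise (Function.onFun Disjoint C) ∧ K = ⋃ i, C i

/-!
Universality on one compact convex set `K` disjoint from `Ω` is a closure condition in
`C(K, ℂ) × C(Ω, ℂ)`, so it defines a `G_δ` set, and its density in the Baire space `O(Ω)` follows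
once polynomials approximate any pair (`P` on `K`, `f` on a compact subset of `Ω`): the Taylor sums
of a polynomial are eventually equal to it. The universal functions are the intersection of
countably many of these sets, as countably many compact convex sets disjoint from `closure Ω`
exhaust all of them.

The approximation is Oka–Weil for two disjoint compact convex sets `K` and `L`. On a compact convex
set a holomorphic function is approximated through its dilations `r ↦ f (ζ + r (z - ζ))`: the
subalgebra `A` of uniform limits of polynomials contains them for small `r` by Taylor expansion,
hence up to `r = 1` by the identity theorem modulo `A`. The same principle applied to
`u ↦ 1 / √u` and `u = T²`, where `T` is an affine function whose real part separates `K` from `L`,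
shows that the indicator `(1 + T / √(T²)) / 2` of `K` in `K ∪ L` is a uniform limit of polynomials.
-/

lemma exists_forall_mem_ball_ball_subset {α : Type*} [PseudoMetricSpace α] {x : α} {s : Set α}
    (hs : s ∈ 𝓝 x) : ∃ r > 0, ∀ y ∈ Metric.ball x r, Metric.ball y r ⊆ s := by
  obtain ⟨ρ, hρ, hρs⟩ := Metric.mem_nhds_iff.1 hs
  refine ⟨ρ / 2, half_pos hρ, fun y hy => (Metric.ball_subset_ball' ?_).trans hρs⟩
  linarith [Metric.mem_ball.1 hy]

section Holomorphy

variable {E F : Type*} [NormedAddCommGroup E] [NormedSpace ℂ E]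
  [NormedAddCommGroup F] [NormedSpace ℂ F]

lemma norm_fderiv_le_of_norm_le_on_ball {f : E → F} {c : E} {R M : ℝ} (hR : 0 < R)
    (hf : DifferentiableOn ℂ f (Metric.ball c R)) (hM : ∀ z ∈ Metric.ball c R, ‖f z‖ ≤ M) :
    ‖fderiv ℂ f c‖ ≤ 2 * M / R := by
  refine Complex.norm_fderiv_le_div_of_mapsTo_ball hf (fun z hz => ?_) hR
  rw [mem_closedBall_iff_norm, two_mul]
  exact norm_sub_le_of_le (hM z hz) (hM c (Metric.mem_ball_self hR))

/- The remainder vanishes to second order at the centre and is bounded by `4 * M`, so this is the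
Schwarz lemma of order two. -/
lemma norm_sub_sub_fderiv_le_of_norm_le_on_ball {f : E → F} {c z : E} {R M : ℝ}
    (hf : DifferentiableOn ℂ f (Metric.ball c R)) (hM : ∀ w ∈ Metric.ball c R, ‖f w‖ ≤ M)
    (hz : z ∈ Metric.ball c R) :
    ‖f z - f c - fderiv ℂ f c (z - c)‖ ≤ 4 * M * (‖z - c‖ / R) ^ 2 := by
  have hR : 0 < R := Metric.nonempty_ball.1 ⟨z, hz⟩
  have hc : c ∈ Metric.ball c R := Metric.mem_ball_self hR
  let g : E → F := fun w => f w - f c - fderiv ℂ f c (w - c)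
  have hgc : g c = 0 := by simp [g]
  have hg : DifferentiableOn ℂ g (Metric.ball c R) :=
    (hf.sub_const _).sub
      ((fderiv ℂ f c).differentiable.comp (differentiable_id.sub_const c)).differentiableOn
  have hg_maps : MapsTo g (Metric.ball c R) (Metric.closedBall (g c) (4 * M)) := by
    intro w hw
    have hlin : ‖fderiv ℂ f c (w - c)‖ ≤ 2 * M := calc
      _ ≤ 2 * M / R * R := (fderiv ℂ f c).le_of_opNorm_le_of_le
        (norm_fderiv_le_of_norm_le_on_ball hR hf hM) (mem_ball_iff_norm.1 hw).le
      _ = 2 * M := div_mul_cancel₀ _ hR.ne'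
    rw [mem_closedBall_iff_norm, hgc, sub_zero]
    exact (norm_sub_le_of_le (norm_sub_le_of_le (hM w hw) (hM c hc)) hlin).trans_eq (by ring)
  have hg_isLittleO : (g · - g c) =o[𝓝 c] (fun w => ‖w - c‖ ^ 1) := by
    simpa only [hgc, sub_zero, pow_one] using
      (hf.differentiableAt (Metric.ball_mem_nhds c hR)).hasFDerivAt.isLittleO.norm_right
  simpa only [dist_eq_norm, hgc, sub_zero] using
    Complex.dist_le_mul_div_pow_of_mapsTo_ball_of_isLittleO hg hg_maps hg_isLittleO hz

variable {ι : Type*} {l : Filter ι} {f : ι → E → F} {g : E → F} {s t : Set E} {R : ℝ}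

lemma uniformCauchySeqOn_fderiv (hR : 0 < R) (ht : ∀ y ∈ t, Metric.ball y R ⊆ s)
    (hf : UniformCauchySeqOn f l s) (hd : ∀ᶠ k in l, DifferentiableOn ℂ (f k) s) :
    UniformCauchySeqOn (fun k => fderiv ℂ (f k)) l t := by
  intro u hu
  obtain ⟨ε, hε, hεu⟩ := Metric.mem_uniformity_dist.1 hu
  have hclose := hf _ (Metric.dist_mem_uniformity (show 0 < ε * R / 4 by positivity))
  filter_upwards [hclose, hd.prod_mk hd] with k hk ⟨hd₁, hd₂⟩ y hy
  have hmem : s ∈ 𝓝 y := mem_of_superset (Metric.ball_mem_nhds y hR) (ht y hy)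
  apply hεu
  rw [dist_eq_norm, ← fderiv_sub (hd₁.differentiableAt hmem) (hd₂.differentiableAt hmem)]
  calc ‖fderiv ℂ (f k.1 - f k.2) y‖ ≤ 2 * (ε * R / 4) / R :=
        norm_fderiv_le_of_norm_le_on_ball hR ((hd₁.sub hd₂).mono (ht y hy))
          fun z hz => (dist_eq_norm (f k.1 z) (f k.2 z) ▸ hk z (ht y hy hz)).le
    _ = ε / 2 := by field_simp; norm_num
    _ < ε := half_lt_self hε

lemma differentiableAt_and_tendstoUniformlyOn_fderiv [CompleteSpace F] [l.NeBot]
    (hR : 0 < R) (hto : IsOpen t)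
    (ht : ∀ y ∈ t, Metric.ball y R ⊆ s) (hf : TendstoUniformlyOn f g l s)
    (hd : ∀ᶠ k in l, DifferentiableOn ℂ (f k) s) :
    (∀ y ∈ t, DifferentiableAt ℂ g y) ∧
      TendstoUniformlyOn (fun k => fderiv ℂ (f k)) (fderiv ℂ g) l t := by
  have hcauchy := uniformCauchySeqOn_fderiv hR ht hf.uniformCauchySeqOn hd
  have hconv : ∀ y ∈ t, ∃ L, Tendsto (fun k => fderiv ℂ (f k) y) l (𝓝 L) :=
    fun y hy => CompleteSpace.complete (hcauchy.cauchy_map hy)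
  choose! g' hg' using hconv
  have hunif := hcauchy.tendstoUniformlyOn_of_tendsto hg'
  have hs : ∀ y ∈ t, s ∈ 𝓝 y := fun y hy =>
    mem_of_superset (Metric.ball_mem_nhds y hR) (ht y hy)
  have hderiv : ∀ y ∈ t, HasFDerivAt g (g' y) y := by
    intro y hy
    refine hasFDerivAt_of_tendstoUniformlyOnFilter (f := f) (l := l)
      ((tendstoUniformlyOn_iff_tendstoUniformlyOnFilter.1 hunif).mono_right
        (le_principal_iff.2 (hto.mem_nhds hy))) ?_ ?_
    · filter_upwards [hd.prod_mk (hto.mem_nhds hy)] with ⟨k, z⟩ ⟨hk, hz⟩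
      exact (hk.differentiableAt (hs z hz)).hasFDerivAt
    · filter_upwards [hs y hy] with z hz using hf.tendsto_at hz
  exact ⟨fun y hy => (hderiv y hy).differentiableAt,
    hunif.congr_right fun y hy => (hderiv y hy).fderiv.symm⟩

lemma differentiableOn_and_tendstoLocallyUniformlyOn_fderiv [CompleteSpace F] [l.NeBot]
    [LocallyCompactSpace E] (hs : IsOpen s) (hf : TendstoLocallyUniformlyOn f g l s)
    (hd : ∀ᶠ k in l, DifferentiableOn ℂ (f k) s) :
    DifferentiableOn ℂ g s ∧
      TendstoLocallyUniformlyOn (fun k => fderiv ℂ (f k)) (fderiv ℂ g) l s := by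
  have hlocal : ∀ x ∈ s, ∃ r > 0, (∀ y ∈ Metric.ball x r, DifferentiableAt ℂ g y) ∧
      TendstoUniformlyOn (fun k => fderiv ℂ (f k)) (fderiv ℂ g) l (Metric.ball x r) := by
    intro x hx
    obtain ⟨K, hKx, hKs, hK⟩ := local_compact_nhds (hs.mem_nhds hx)
    obtain ⟨r, hr, hball⟩ := exists_forall_mem_ball_ball_subset hKx
    exact ⟨r, hr, differentiableAt_and_tendstoUniformlyOn_fderiv hr Metric.isOpen_ball hball
      ((tendstoLocallyUniformlyOn_iff_forall_isCompact hs).1 hf K hKs hK)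
      (hd.mono fun _ hk => hk.mono hKs)⟩
  constructor
  · intro x hx
    obtain ⟨r, hr, hdiff, -⟩ := hlocal x hx
    exact (hdiff x (Metric.mem_ball_self hr)).differentiableWithinAt
  · intro u hu x hx
    obtain ⟨r, hr, -, hunif⟩ := hlocal x hx
    exact ⟨_, mem_nhdsWithin_of_mem_nhds (Metric.ball_mem_nhds x hr), hunif u hu⟩

lemma eventually_norm_smul_lt (hR : 0 < R) (v : E) : ∀ᶠ h : ℂ in 𝓝[≠] 0, ‖h • v‖ < R :=
  nhdsWithin_le_nhds <| (by fun_prop : Continuous fun h : ℂ => ‖h • v‖).tendsto' 0 0 (by simp)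
    |>.eventually_lt_const hR

lemma tendstoUniformlyOn_slope_fderiv_apply {f : E → F} {M : ℝ} (hR : 0 < R)
    (ht : ∀ y ∈ t, Metric.ball y R ⊆ s) (hf : DifferentiableOn ℂ f s)
    (hM : ∀ z ∈ s, ‖f z‖ ≤ M) (v : E) :
    TendstoUniformlyOn (fun (h : ℂ) z => h⁻¹ • (f (z + h • v) - f z))
      (fun z => fderiv ℂ f z v) (𝓝[≠] 0) t := by
  rw [Metric.tendstoUniformlyOn_iff]
  intro ε hε
  have hbound : ∀ᶠ h : ℂ in 𝓝[≠] 0, ‖h‖ * (4 * M * (‖v‖ / R) ^ 2) < ε :=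
    nhdsWithin_le_nhds <| (by fun_prop :
      Continuous fun h : ℂ => ‖h‖ * (4 * M * (‖v‖ / R) ^ 2)).tendsto' 0 0 (by simp)
      |>.eventually_lt_const hε
  filter_upwards [eventually_norm_smul_lt hR v, hbound, self_mem_nhdsWithin] with h hhR hhε hh0 z hz
  have hquad := norm_sub_sub_fderiv_le_of_norm_le_on_ball (hf.mono (ht z hz))
    (fun w hw => hM w (ht z hz hw)) (z := z + h • v) (by simpa [mem_ball_iff_norm] using hhR)
  rw [add_sub_cancel_left, map_smul, norm_smul] at hquad
  have hh : 0 < ‖h‖ := norm_pos_iff.2 hh0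
  calc dist (fderiv ℂ f z v) (h⁻¹ • (f (z + h • v) - f z))
      = ‖h‖⁻¹ * ‖f (z + h • v) - f z - h • fderiv ℂ f z v‖ := by
        rw [dist_comm, dist_eq_norm, ← norm_inv, ← norm_smul, smul_sub _ _ (h • _),
          inv_smul_smul₀ hh0]
    _ ≤ ‖h‖⁻¹ * (4 * M * (‖h‖ * ‖v‖ / R) ^ 2) := by gcongr
    _ = ‖h‖ * (4 * M * (‖v‖ / R) ^ 2) := by field_simp
    _ < ε := hhε

lemma differentiableOn_fderiv_apply [CompleteSpace F] {f : E → F} (hs : IsOpen s)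
    (hf : DifferentiableOn ℂ f s) (v : E) : DifferentiableOn ℂ (fun z => fderiv ℂ f z v) s := by
  intro x hx
  have hbdd : {z ∈ s | ‖f z‖ ≤ ‖f x‖ + 1} ∈ 𝓝 x := inter_mem (hs.mem_nhds hx)
    ((hf.continuousOn.continuousAt (hs.mem_nhds hx)).norm.eventually_le_const (lt_add_one _))
  obtain ⟨R, hR, hball⟩ := exists_forall_mem_ball_ball_subset hbdd
  have hslope := tendstoUniformlyOn_slope_fderiv_apply hR hball (hf.mono (sep_subset _ _))
    (fun z hz => hz.2) v
  have hslope_diff : ∀ᶠ h : ℂ in 𝓝[≠] 0,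
      DifferentiableOn ℂ (fun z => h⁻¹ • (f (z + h • v) - f z)) (Metric.ball x R) := by
    filter_upwards [eventually_norm_smul_lt hR v] with h hh
    refine ((hf.comp (by fun_prop) fun z hz => (hball z hz ?_).1).sub
      (hf.mono fun z hz => (hball z hz (Metric.mem_ball_self hR)).1)).const_smul _
    simpa [mem_ball_iff_norm] using hh
  obtain ⟨r, hr, hball'⟩ := exists_forall_mem_ball_ball_subset (Metric.ball_mem_nhds x hR)
  exact ((differentiableAt_and_tendstoUniformlyOn_fderiv hr Metric.isOpen_ball hball' hslope
    hslope_diff).1 x (Metric.mem_ball_self hr)).differentiableWithinAt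

end Holomorphy

lemma circleIntegral_comp_continuousLinearMap {E F : Type*} [NormedAddCommGroup E]
    [NormedSpace ℂ E] [CompleteSpace E] [NormedAddCommGroup F] [NormedSpace ℂ F] [CompleteSpace F]
    (L : E →L[ℂ] F) {f : ℂ → E} {c : ℂ} {R : ℝ} (hf : CircleIntegrable f c R) :
    (∮ z in C(c, R), L (f z)) = L (∮ z in C(c, R), f z) := by
  simpa only [circleIntegral, map_smul] using L.intervalIntegral_comp_comm hf.out

section CompactParameter

variable {X : Type*} [TopologicalSpace X]

lemma differentiableOn_of_forall_differentiableOn_apply [CompactSpace X] {F : Type*}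
    [NormedAddCommGroup F] [NormedSpace ℂ F] [CompleteSpace F] {φ : ℂ → C(X, F)} {V : Set ℂ}
    (hV : IsOpen V) (hφ : ContinuousOn φ V)
    (hφx : ∀ x, DifferentiableOn ℂ (fun r => φ r x) V) : DifferentiableOn ℂ φ V := by
  intro c hc
  obtain ⟨R, hR, hRV⟩ := Metric.nhds_basis_closedBall.mem_iff.1 (hV.mem_nhds hc)
  lift R to NNReal using hR.le
  have hsphere : ContinuousOn φ (Metric.sphere c R) :=
    hφ.mono (Metric.sphere_subset_closedBall.trans hRV)
  have hcauchy := hasFPowerSeriesOn_cauchy_integral (hsphere.circleIntegrable R.2)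
    (by exact_mod_cast hR)
  refine (hcauchy.analyticAt.differentiableAt.congr_of_eventuallyEq ?_).differentiableWithinAt
  filter_upwards [Metric.ball_mem_nhds c hR] with w hw
  have hne : ∀ z ∈ Metric.sphere c R, z - w ≠ 0 := by
    rintro z hz hzw
    rw [sub_eq_zero.1 hzw] at hz
    exact (Metric.mem_ball.1 hw).ne hz
  have hkernel : CircleIntegrable (fun z => (z - w)⁻¹ • φ z) c R :=
    (((continuousOn_id.sub continuousOn_const).inv₀ hne).smul hsphere).circleIntegrable R.2
  ext x
  calc φ w x = (2 * Real.pi * Complex.I)⁻¹ • ∮ z in C(c, R), (z - w)⁻¹ • φ z x := by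
        rw [((hφx x).mono hRV).circleIntegral_sub_inv_smul hw,
          inv_smul_smul₀ Complex.two_pi_I_ne_zero]
    _ = (2 * Real.pi * Complex.I)⁻¹ •
          ContinuousMap.evalCLM ℂ x (∮ z in C(c, R), (z - w)⁻¹ • φ z) := by
        rw [← circleIntegral_comp_continuousLinearMap _ hkernel]
        rfl

variable {ι : Type*}

/-- The continuous functions `x ↦ f (ζ + r • (v x - ζ))` on `X` contracting `f ∘ v` towards the
centre `ζ`, parametrised by complex `r`. The junk value `0` is taken at those `r` for which this is
not continuous in `x`. -/
def dilationFamily (v : ι → C(X, ℂ)) (ζ : ι → ℂ) (f : (ι → ℂ) → ℂ) (r : ℂ) : C(X, ℂ) :=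
  .mkD (fun x => f (AffineMap.lineMap ζ (v · x) r)) 0

/-- The parameters `r` for which `ζ + r • (v x - ζ)` stays in `Ω` for all `x`. -/
def dilationDomain (v : ι → C(X, ℂ)) (ζ : ι → ℂ) (Ω : Set (ι → ℂ)) : Set ℂ :=
  {r | ∀ x, AffineMap.lineMap ζ (v · x) r ∈ Ω}

variable {v : ι → C(X, ℂ)} {ζ : ι → ℂ} {f : (ι → ℂ) → ℂ} {Ω : Set (ι → ℂ)}

lemma continuous_lineMap_apply (v : ι → C(X, ℂ)) (ζ : ι → ℂ) :
    Continuous fun p : ℂ × X => AffineMap.lineMap ζ (v · p.2) p.1 := by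
  simp only [AffineMap.lineMap_apply_module]
  fun_prop

lemma isOpen_dilationDomain [CompactSpace X] (hΩ : IsOpen Ω) : IsOpen (dilationDomain v ζ Ω) := by
  let γ : C(ℂ × X, ι → ℂ) := ⟨_, continuous_lineMap_apply v ζ⟩
  have hpre := (ContinuousMap.isOpen_setOfPred_mapsTo isCompact_univ hΩ).preimage γ.curry.continuous
  convert hpre using 1
  ext r
  simp [dilationDomain, MapsTo, γ]

lemma dilationFamily_apply (hf : ContinuousOn f Ω) {r : ℂ} (hr : r ∈ dilationDomain v ζ Ω)
    (x : X) : dilationFamily v ζ f r x = f (AffineMap.lineMap ζ (v · x) r) := by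
  have hline : Continuous fun x => AffineMap.lineMap ζ (v · x) r :=
    ((continuous_lineMap_apply v ζ).comp (Continuous.prodMk_right r) :)
  exact ContinuousMap.mkD_apply_of_continuous (hf.comp_continuous hline hr)

lemma zero_mem_dilationDomain (hζ : ζ ∈ Ω) : 0 ∈ dilationDomain v ζ Ω := by
  simpa [dilationDomain] using fun _ => hζ

lemma dilationFamily_zero (hf : ContinuousOn f Ω) (hζ : ζ ∈ Ω) :
    dilationFamily v ζ f 0 = algebraMap ℂ C(X, ℂ) (f ζ) := by
  ext x
  simp [dilationFamily_apply hf (zero_mem_dilationDomain hζ)]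

variable [CompactSpace X]

lemma differentiableOn_dilationFamily [Finite ι] (hΩ : IsOpen Ω) (hf : DifferentiableOn ℂ f Ω) :
    DifferentiableOn ℂ (dilationFamily v ζ f) (dilationDomain v ζ Ω) := by
  have := Fintype.ofFinite ι
  have hmaps : MapsTo (fun p : ℂ × X => AffineMap.lineMap ζ (v · p.2) p.1)
      (dilationDomain v ζ Ω ×ˢ univ) Ω := fun p hp => hp.1 p.2
  have hcont := hf.continuousOn.comp (continuous_lineMap_apply v ζ).continuousOn hmaps
  refine differentiableOn_of_forall_differentiableOn_apply (isOpen_dilationDomain hΩ)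
    (ContinuousMap.continuousOn_mkD_of_uncurry _ _ hcont) fun x => ?_
  have hline : MapsTo (AffineMap.lineMap ζ (v · x)) (dilationDomain v ζ Ω) Ω := fun r hr => hr x
  exact (hf.comp (AffineMap.differentiableOn _) hline).congr
    fun r hr => dilationFamily_apply hf.continuousOn hr x

lemma hasDerivAt_dilationFamily [Fintype ι] [DecidableEq ι] (hΩ : IsOpen Ω)
    (hf : DifferentiableOn ℂ f Ω) {r : ℂ} (hr : r ∈ dilationDomain v ζ Ω) :
    HasDerivAt (dilationFamily v ζ f) (∑ i, (v i - algebraMap ℂ _ (ζ i)) *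
      dilationFamily v ζ (fun z => fderiv ℂ f z (Pi.single i 1)) r) r := by
  have hV := (isOpen_dilationDomain hΩ (v := v) (ζ := ζ)).mem_nhds hr
  have hderiv := ((differentiableOn_dilationFamily hΩ hf).differentiableAt hV).hasDerivAt
  suffices hval : ∀ x, deriv (dilationFamily v ζ f) r x = ∑ i, (v i x - ζ i) *
      fderiv ℂ f (AffineMap.lineMap ζ (v · x) r) (Pi.single i 1) by
    refine hderiv.congr_deriv ?_
    ext x
    simp [hval, dilationFamily_apply (differentiableOn_fderiv_apply hΩ hf _).continuousOn hr]
  intro x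
  have heval : HasDerivAt (fun s => f (AffineMap.lineMap ζ (v · x) s))
      (deriv (dilationFamily v ζ f) r x) r :=
    HasDerivAt.congr_of_eventuallyEq (f := fun s => dilationFamily v ζ f s x)
      ((ContinuousMap.evalCLM ℂ x : C(X, ℂ) →L[ℂ] ℂ).hasFDerivAt.comp_hasDerivAt r hderiv)
      (mem_of_superset hV fun s hs => (dilationFamily_apply hf.continuousOn hs x).symm)
  have hchain := (hf.differentiableAt (hΩ.mem_nhds (hr x))).hasFDerivAt.comp_hasDerivAt r
    AffineMap.hasDerivAt_lineMap
  rw [heval.unique hchain, pi_eq_sum_univ' ((v · x) - ζ), map_sum]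
  simp only [map_smul, smul_eq_mul, Pi.sub_apply]

lemma iteratedDeriv_dilationFamily_mem [Finite ι] {A : Subalgebra ℂ C(X, ℂ)}
    (hv : ∀ i, v i ∈ A) (hΩ : IsOpen Ω) (hζ : ζ ∈ Ω) (hf : DifferentiableOn ℂ f Ω) (k : ℕ) :
    iteratedDeriv k (dilationFamily v ζ f) 0 ∈ A := by
  classical
  have := Fintype.ofFinite ι
  have h0 : 0 ∈ dilationDomain v ζ Ω := zero_mem_dilationDomain hζ
  have hV := (isOpen_dilationDomain hΩ).mem_nhds h0
  induction k generalizing f with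
  | zero =>
    rw [iteratedDeriv_zero, dilationFamily_zero hf.continuousOn hζ]
    exact A.algebraMap_mem _
  | succ k ih =>
    have hpartial : ∀ i, DifferentiableOn ℂ (fun z => fderiv ℂ f z (Pi.single i 1)) Ω :=
      fun i => differentiableOn_fderiv_apply hΩ hf _
    have hsmooth : ∀ i, ContDiffAt ℂ k
        (dilationFamily v ζ fun z => fderiv ℂ f z (Pi.single i 1)) 0 := fun i =>
      ((differentiableOn_dilationFamily hΩ (hpartial i)).analyticAt hV).contDiffAt
    have hderiv : deriv (dilationFamily v ζ f) =ᶠ[𝓝 0] fun r =>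
        ∑ i, (v i - algebraMap ℂ _ (ζ i)) *
          dilationFamily v ζ (fun z => fderiv ℂ f z (Pi.single i 1)) r :=
      mem_of_superset hV fun r hr => (hasDerivAt_dilationFamily hΩ hf hr).deriv
    rw [iteratedDeriv_succ', hderiv.iteratedDeriv_eq,
      iteratedDeriv_fun_sum fun i _ => contDiffAt_const.mul (hsmooth i)]
    refine A.sum_mem fun i _ => ?_
    rw [iteratedDeriv_const_mul _ (hsmooth i)]
    exact A.mul_mem (A.sub_mem (hv i) (A.algebraMap_mem _)) (ih (hpartial i))

/- The dilated functions lie in `A` for small `r` by their Taylor series at `r = 0`, hence for all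
`r ∈ [0, 1]` by the identity theorem in the quotient `C(X, ℂ) ⧸ A`. -/
lemma exists_mem_subalgebra_eq_comp_of_starConvex [Finite ι] {A : Subalgebra ℂ C(X, ℂ)}
    (hA : IsClosed (A : Set C(X, ℂ))) (hv : ∀ i, v i ∈ A) (hΩ : IsOpen Ω)
    (hΩζ : StarConvex ℝ ζ Ω) (hζ : ζ ∈ Ω) (hf : DifferentiableOn ℂ f Ω)
    (hvΩ : ∀ x, (v · x) ∈ Ω) : ∃ g ∈ A, ∀ x, g x = f (v · x) := by
  have h0 : 0 ∈ dilationDomain v ζ Ω := zero_mem_dilationDomain hζ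
  have h1 : 1 ∈ dilationDomain v ζ Ω := by simpa [dilationDomain] using hvΩ
  have hsegment : (fun t : ℝ => (t : ℂ)) '' Icc 0 1 ⊆ dilationDomain v ζ Ω := by
    rintro _ ⟨t, ht, rfl⟩ x
    have hmem := hΩζ (hvΩ x) (sub_nonneg.2 ht.2) ht.1 (sub_add_cancel 1 t)
    convert hmem using 1
    ext i
    simp [AffineMap.lineMap_apply_module]
  have hdiff := differentiableOn_dilationFamily (v := v) (ζ := ζ) hΩ hf
  obtain ⟨δ, hδ, hδV⟩ := Metric.isOpen_iff.1 (isOpen_dilationDomain hΩ) 0 h0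
  let S : Submodule ℂ C(X, ℂ) := A.toSubmodule
  have : IsClosed (S : Set C(X, ℂ)) := hA
  have hnear : ∀ r ∈ Metric.ball (0 : ℂ) δ, dilationFamily v ζ f r ∈ S := fun r hr =>
    hA.mem_of_tendsto (Complex.hasSum_taylorSeries_on_ball (hdiff.mono hδV) hr) <|
      Eventually.of_forall fun t => S.sum_mem fun k _ => S.smul_mem _ <| S.smul_mem _ <|
        iteratedDeriv_dilationFamily_mem hv hΩ hζ hf k
  have hquot : AnalyticOnNhd ℂ (fun r => S.mkQL (dilationFamily v ζ f r))
      ((fun t : ℝ => (t : ℂ)) '' Icc 0 1) := fun r hr => (S.mkQL.analyticAt _).comp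
    (hdiff.analyticAt ((isOpen_dilationDomain hΩ).mem_nhds (hsegment hr)))
  have hzero := hquot.eqOn_zero_of_preconnected_of_eventuallyEq_zero
    (isPreconnected_Icc.image _ Complex.continuous_ofReal.continuousOn)
    ⟨0, by simp, Complex.ofReal_zero⟩
    (mem_of_superset (Metric.ball_mem_nhds 0 hδ)
      fun r hr => (Submodule.Quotient.mk_eq_zero S).2 (hnear r hr))
    ⟨1, by simp, Complex.ofReal_one⟩
  exact ⟨_, (Submodule.Quotient.mk_eq_zero S).1 hzero, fun x => by
    simp [dilationFamily_apply hf.continuousOn h1]⟩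

lemma exists_idempotent_mem_subalgebra {A : Subalgebra ℂ C(X, ℂ)}
    (hA : IsClosed (A : Set C(X, ℂ))) {T : C(X, ℂ)} (hT : T ∈ A) (hre : ∀ x, (T x).re ≠ 0) :
    ∃ e ∈ A, (∀ x, 0 < (T x).re → e x = 1) ∧ ∀ x, (T x).re < 0 → e x = 0 := by
  let Ω : Set (Unit → ℂ) := {u | u () ∈ Complex.slitPlane}
  have hΩ : IsOpen Ω := Complex.isOpen_slitPlane.preimage (continuous_apply ())
  have hΩ_star : StarConvex ℝ 1 Ω := fun u hu a b ha hb hab =>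
    Complex.starConvex_one_slitPlane hu ha hb hab
  have hf : DifferentiableOn ℂ (fun u : Unit → ℂ => (u () ^ (2⁻¹ : ℂ))⁻¹) Ω := by
    intro u hu
    have hne : u () ≠ 0 := Complex.slitPlane_ne_zero hu
    refine DifferentiableAt.differentiableWithinAt (DifferentiableAt.inv ?_ ?_)
    · exact ((differentiableAt_apply () u).cpow_const hu)
    · simp [Complex.cpow_eq_zero_iff, hne]
  have hsq_mem : ∀ x, T x ^ 2 ∈ Complex.slitPlane := by
    intro x
    rw [Complex.mem_slitPlane_iff, sq, Complex.mul_re, Complex.mul_im]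
    by_cases him : (T x).im = 0
    · left
      simpa [him] using mul_self_pos.2 (hre x)
    · right
      rw [mul_comm (T x).im, ← two_mul]
      exact mul_ne_zero two_ne_zero (mul_ne_zero (hre x) him)
  obtain ⟨g, hgA, hg⟩ := exists_mem_subalgebra_eq_comp_of_starConvex (v := fun _ : Unit => T ^ 2)
    hA (fun _ => A.pow_mem hT 2) hΩ hΩ_star (by simp [Ω]) hf hsq_mem
  refine ⟨algebraMap ℂ _ 2⁻¹ * (1 + T * g), A.mul_mem (A.algebraMap_mem _)
    (A.add_mem A.one_mem (A.mul_mem hT hgA)), fun x hx => ?_, fun x hx => ?_⟩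
  · have hsqrt : ((T x) ^ 2) ^ (2⁻¹ : ℂ) = T x := Complex.sq_cpow_two_inv hx
    have hne : T x ≠ 0 := by rintro h; simp [h] at hx
    simp only [ContinuousMap.mul_apply, ContinuousMap.add_apply, ContinuousMap.one_apply,
      algebraMap_apply, hg, ContinuousMap.pow_apply, hsqrt, mul_inv_cancel₀ hne, smul_eq_mul]
    norm_num
  · have hsqrt : ((T x) ^ 2) ^ (2⁻¹ : ℂ) = -T x := by
      rw [← neg_sq]; exact Complex.sq_cpow_two_inv (by simpa using hx)
    have hne : T x ≠ 0 := by rintro h; simp [h] at hx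
    simp [hg, hsqrt, hne]

end CompactParameter

lemma exists_finset_subset_convexHull_subset_of_isCompact {E : Type*}
    [NormedAddCommGroup E] [NormedSpace ℝ E] [FiniteDimensional ℝ E] {K s : Set E}
    (hs : Convex ℝ s) (hso : IsOpen s) (hK : IsCompact K) (hKs : K ⊆ s) :
    ∃ u : Finset E, K ⊆ convexHull ℝ u ∧ convexHull ℝ u ⊆ s := by
  classical
  have hlocal : ∀ x ∈ K, ∃ u : Finset E, convexHull ℝ (u : Set E) ∈ 𝓝 x ∧ convexHull ℝ u ⊆ s := by
    intro x hx
    obtain ⟨u, hxu, hus⟩ :=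
      (convex_singleton x).exists_subset_interior_convexHull_finset_of_isCompact
        isCompact_singleton (by rw [nhdsSet_singleton]; exact hso.mem_nhds (hKs hx))
    exact ⟨u, mem_interior_iff_mem_nhds.1 (hxu rfl), hus⟩
  choose! u hu hus using hlocal
  obtain ⟨t, htK, hKt⟩ := hK.elim_nhds_subcover _ hu
  refine ⟨t.biUnion u, hKt.trans ?_, convexHull_min ?_ hs⟩
  · refine iUnion₂_subset fun x hx => convexHull_mono ?_
    exact_mod_cast Finset.subset_biUnion_of_mem u hx
  · rw [Finset.coe_biUnion]
    exact iUnion₂_subset fun x hx => (subset_convexHull ℝ _).trans (hus x (htK x hx))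

section PolynomialApproximation

variable {n : ℕ} {K L Ω : Set (Fin n → ℂ)}

/-- The restriction of polynomials to a set, as an algebra homomorphism into the continuous
functions. -/
def polyRestrict (K : Set (Fin n → ℂ)) : MvPolynomial (Fin n) ℂ →ₐ[ℂ] C(K, ℂ) :=
  MvPolynomial.aeval fun i => ⟨fun z => z.1 i, (continuous_apply i).comp continuous_subtype_val⟩

@[simp]
lemma polyRestrict_apply (Q : MvPolynomial (Fin n) ℂ) (z : K) :
    polyRestrict K Q z = mvEval Q z := by
  induction Q using MvPolynomial.induction_on with
  | C a => simp [polyRestrict, mvEval]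
  | add p q hp hq => simp [mvEval, hp, hq]
  | mul_X p i hp => rw [map_mul, ContinuousMap.mul_apply, hp]; simp [polyRestrict, mvEval]

/-- The algebra `P(K)` of uniform limits of holomorphic polynomials on a compact set `K`. -/
def polyClosure (K : Set (Fin n → ℂ)) [CompactSpace K] : Subalgebra ℂ C(K, ℂ) :=
  (polyRestrict K).range.topologicalClosure

lemma isClosed_polyClosure (K : Set (Fin n → ℂ)) [CompactSpace K] :
    IsClosed (polyClosure K : Set C(K, ℂ)) :=
  Subalgebra.isClosed_topologicalClosure _

lemma polyRestrict_mem_polyClosure (K : Set (Fin n → ℂ)) [CompactSpace K]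
    (Q : MvPolynomial (Fin n) ℂ) :
    polyRestrict K Q ∈ polyClosure K :=
  Subalgebra.le_topologicalClosure _ ⟨Q, rfl⟩

lemma exists_mvEval_dist_lt_of_mem_polyClosure [CompactSpace K] {g : C(K, ℂ)}
    (hg : g ∈ polyClosure K) {ε : ℝ} (hε : 0 < ε) :
    ∃ Q : MvPolynomial (Fin n) ℂ, ∀ z : K, dist (mvEval Q z) (g z) < ε := by
  obtain ⟨_, ⟨Q, rfl⟩, hQ⟩ := Metric.mem_closure_iff.1 hg ε hε
  refine ⟨Q, fun z => ?_⟩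
  rw [dist_comm, ← polyRestrict_apply]
  exact (ContinuousMap.dist_apply_le_dist z).trans_lt hQ

lemma exists_mem_polyClosure_eq [CompactSpace L] (hLΩ : L ⊆ Ω) (hΩo : IsOpen Ω)
    {ζ : Fin n → ℂ} (hΩ : StarConvex ℝ ζ Ω) (hζ : ζ ∈ Ω) {f : (Fin n → ℂ) → ℂ}
    (hf : DifferentiableOn ℂ f Ω) : ∃ g ∈ polyClosure L, ∀ z : L, g z = f z := by
  simpa [mvEval] using exists_mem_subalgebra_eq_comp_of_starConvex (isClosed_polyClosure L)
    (fun i => polyRestrict_mem_polyClosure L (MvPolynomial.X i)) hΩo hΩ hζ hf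
    (by simpa [mvEval] using fun z hz => hLΩ hz)

lemma exists_mvEval_eq_continuousLinearMap (φ : (Fin n → ℂ) →L[ℂ] ℂ) :
    ∃ T : MvPolynomial (Fin n) ℂ, ∀ z, mvEval T z = φ z := by
  refine ⟨∑ i, MvPolynomial.C (φ (Pi.single i 1)) * MvPolynomial.X i, fun z => ?_⟩
  conv_rhs => rw [pi_eq_sum_univ' z, map_sum]
  simp [mvEval, mul_comm]

lemma exists_mem_polyClosure_union_eq_one_eq_zero [CompactSpace ↥(K ∪ L)] (hK : IsClosed K)
    (hKc : Convex ℝ K) (hL : IsCompact L) (hLc : Convex ℝ L) (hKL : Disjoint K L) :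
    ∃ e ∈ polyClosure (K ∪ L),
      (∀ z : ↥(K ∪ L), z.1 ∈ K → e z = 1) ∧ ∀ z : ↥(K ∪ L), z.1 ∈ L → e z = 0 := by
  obtain ⟨φ, a, b, ha, hab, hb⟩ :=
    RCLike.geometric_hahn_banach_compact_closed (𝕜 := ℂ) hLc hL hKc hK hKL.symm
  obtain ⟨T₀, hT₀⟩ := exists_mvEval_eq_continuousLinearMap φ
  let T := T₀ - MvPolynomial.C (a : ℂ)
  have hT : ∀ z : ↥(K ∪ L), (polyRestrict (K ∪ L) T z).re = (φ z).re - a := by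
    simp only [mvEval] at hT₀
    simp [T, mvEval, hT₀]
  have hK_pos : ∀ z : ↥(K ∪ L), z.1 ∈ K → 0 < (polyRestrict (K ∪ L) T z).re :=
    fun z hz => hT z ▸ sub_pos.2 (hab.trans (hb z hz))
  have hL_neg : ∀ z : ↥(K ∪ L), z.1 ∈ L → (polyRestrict (K ∪ L) T z).re < 0 :=
    fun z hz => hT z ▸ sub_neg.2 (ha z hz)
  obtain ⟨e, he, he_one, he_zero⟩ := exists_idempotent_mem_subalgebra
    (isClosed_polyClosure (K ∪ L)) (polyRestrict_mem_polyClosure _ T)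
    fun z => z.2.elim (fun hz => (hK_pos z hz).ne') fun hz => (hL_neg z hz).ne
  exact ⟨e, he, fun z hz => he_one z (hK_pos z hz), fun z hz => he_zero z (hL_neg z hz)⟩

lemma exists_mvEval_dist_lt_of_disjoint (hK : IsCompact K) (hKc : Convex ℝ K)
    (hL : IsCompact L) (hLc : Convex ℝ L) (hKL : Disjoint K L) (P Q : MvPolynomial (Fin n) ℂ)
    {ε : ℝ} (hε : 0 < ε) :
    ∃ R : MvPolynomial (Fin n) ℂ, (∀ z ∈ K, dist (mvEval R z) (mvEval P z) < ε) ∧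
      ∀ z ∈ L, dist (mvEval R z) (mvEval Q z) < ε := by
  have := isCompact_iff_compactSpace.1 (hK.union hL)
  obtain ⟨e, he, he_one, he_zero⟩ := exists_mem_polyClosure_union_eq_one_eq_zero
    hK.isClosed hKc hL hLc hKL
  have hmem : polyRestrict (K ∪ L) Q + polyRestrict (K ∪ L) (P - Q) * e ∈ polyClosure (K ∪ L) :=
    add_mem (polyRestrict_mem_polyClosure _ _) (mul_mem (polyRestrict_mem_polyClosure _ _) he)
  obtain ⟨R, hR⟩ := exists_mvEval_dist_lt_of_mem_polyClosure hmem hε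
  refine ⟨R, fun z hz => ?_, fun z hz => ?_⟩
  · simpa [he_one ⟨z, .inl hz⟩ hz] using hR ⟨z, .inl hz⟩
  · simpa [he_zero ⟨z, .inr hz⟩ hz] using hR ⟨z, .inr hz⟩

lemma exists_mvEval_dist_lt_of_disjoint_convex (hK : IsCompact K) (hKc : Convex ℝ K)
    (hΩo : IsOpen Ω) (hΩ : Convex ℝ Ω) (hKΩ : Disjoint K Ω) (hL : IsCompact L) (hLΩ : L ⊆ Ω)
    (P : MvPolynomial (Fin n) ℂ) {f : (Fin n → ℂ) → ℂ} (hf : DifferentiableOn ℂ f Ω)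
    {ε : ℝ} (hε : 0 < ε) :
    ∃ Q : MvPolynomial (Fin n) ℂ, (∀ z ∈ K, dist (mvEval Q z) (mvEval P z) < ε) ∧
      ∀ z ∈ L, dist (mvEval Q z) (f z) < ε := by
  obtain ⟨u, hLu, huΩ⟩ := exists_finset_subset_convexHull_subset_of_isCompact hΩ hΩo hL hLΩ
  have hu := u.finite_toSet.isCompact_convexHull ℝ
  have := isCompact_iff_compactSpace.1 hu
  obtain rfl | ⟨ζ, hζ⟩ := Ω.eq_empty_or_nonempty
  · exact ⟨P, fun z _ => by simpa using hε, fun z hz => (hLΩ hz).elim⟩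
  obtain ⟨g, hg, hgf⟩ := exists_mem_polyClosure_eq huΩ hΩo (hΩ.starConvex hζ) hζ hf
  obtain ⟨Q, hQ⟩ := exists_mvEval_dist_lt_of_mem_polyClosure hg (half_pos hε)
  obtain ⟨R, hRP, hRQ⟩ := exists_mvEval_dist_lt_of_disjoint hK hKc hu (convex_convexHull ℝ _)
    (hKΩ.mono_right huΩ) P Q (half_pos hε)
  refine ⟨R, fun z hz => (hRP z hz).trans (half_lt_self hε), fun z hz => ?_⟩
  calc dist (mvEval R z) (f z) ≤ dist (mvEval R z) (mvEval Q z) + dist (mvEval Q z) (f z) :=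
        dist_triangle _ _ _
    _ < ε / 2 + ε / 2 := add_lt_add (hRQ z (hLu hz)) (hgf ⟨z, hLu hz⟩ ▸ hQ ⟨z, hLu hz⟩)
    _ = ε := add_halves ε

end PolynomialApproximation

lemma coeff_iterate_pderiv {σ R : Type*} [CommSemiring R] {i : σ} {m : σ →₀ ℕ} (hm : m i = 0)
    (k : ℕ) (Q : MvPolynomial σ R) :
    ((MvPolynomial.pderiv i)^[k] Q).coeff m = Q.coeff (m + Finsupp.single i k) * k.factorial := by
  induction k generalizing Q with
  | zero => simp
  | succ k ih =>
    rw [Function.iterate_succ_apply, ih, MvPolynomial.coeff_pderiv, add_assoc,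
      ← Finsupp.single_add, Nat.factorial_succ]
    simp only [Finsupp.add_apply, hm, Finsupp.single_eq_same]
    push_cast
    ring

lemma coeff_foldr_iterate_pderiv {σ R : Type*} [CommSemiring R] (ℓ : σ → ℕ) {l : List σ}
    (hl : l.Nodup) {m : σ →₀ ℕ} (hm : ∀ i ∈ l, m i = 0) (Q : MvPolynomial σ R) :
    (l.foldr (fun i P => (MvPolynomial.pderiv i)^[ℓ i] P) Q).coeff m =
      Q.coeff (m + (l.map fun i => Finsupp.single i (ℓ i)).sum) *
        (l.map fun i => ((ℓ i).factorial : R)).prod := by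
  induction l generalizing m with
  | nil => simp
  | cons a l ih =>
    obtain ⟨ha, hl⟩ := List.nodup_cons.1 hl
    have hm' : ∀ i ∈ l, (m + Finsupp.single a (ℓ a)) i = 0 := by
      intro i hi
      have hia : i ≠ a := ne_of_mem_of_not_mem hi ha
      simp [hm i (List.mem_cons_of_mem a hi), Finsupp.single_eq_of_ne hia]
    rw [List.foldr_cons, coeff_iterate_pderiv (hm a List.mem_cons_self), ih hl hm']
    simp only [List.map_cons, List.sum_cons, List.prod_cons, add_assoc]
    ring

section TaylorSums

variable {n : ℕ}

lemma differentiable_mvEval (Q : MvPolynomial (Fin n) ℂ) : Differentiable ℂ (mvEval Q) :=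
  fun z => (AnalyticAt.aeval_mvPolynomial (fun i =>
    (ContinuousLinearMap.proj i : (Fin n → ℂ) →L[ℂ] ℂ).analyticAt z) Q).differentiableAt

lemma pd_mvEval (i : Fin n) (Q : MvPolynomial (Fin n) ℂ) :
    pd i (mvEval Q) = mvEval (MvPolynomial.pderiv i Q) := by
  funext z
  induction Q using MvPolynomial.induction_on with
  | C a =>
    have hconst : mvEval (MvPolynomial.C a : MvPolynomial (Fin n) ℂ) = fun _ => a := by
      ext; simp [mvEval]
    simp [pd, hconst, mvEval]
  | add p q hp hq =>
    have hadd : mvEval (p + q) = mvEval p + mvEval q := by ext; simp [mvEval]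
    rw [pd, hadd, fderiv_add (differentiable_mvEval p z) (differentiable_mvEval q z)]
    simp_all [pd, mvEval]
  | mul_X p j hp =>
    have hmul : mvEval (p * MvPolynomial.X j) =
        mvEval p * ⇑(ContinuousLinearMap.proj j : (Fin n → ℂ) →L[ℂ] ℂ) := by ext; simp [mvEval]
    rw [pd, hmul, fderiv_mul (differentiable_mvEval p z) (ContinuousLinearMap.differentiableAt _),
      ContinuousLinearMap.fderiv]
    simp_all [pd, mvEval, MvPolynomial.pderiv_X, Pi.single_apply, eq_comm,
      apply_ite (MvPolynomial.eval z)]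

/-- The polynomial `Q(ζ + X)`, whose coefficients are the Taylor coefficients of `Q` at `ζ`. -/
def mvTranslate (ζ : Fin n → ℂ) : MvPolynomial (Fin n) ℂ →ₐ[ℂ] MvPolynomial (Fin n) ℂ :=
  MvPolynomial.aeval fun i => MvPolynomial.X i + MvPolynomial.C (ζ i)

lemma mvEval_mvTranslate (ζ z : Fin n → ℂ) (Q : MvPolynomial (Fin n) ℂ) :
    mvEval (mvTranslate ζ Q) z = mvEval Q (z + ζ) := by
  induction Q using MvPolynomial.induction_on with
  | C a => simp [mvEval]
  | add p q hp hq => simp_all [mvEval]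
  | mul_X p i hp => simp_all [mvEval, mvTranslate]

lemma mvTranslate_pderiv (ζ : Fin n → ℂ) (i : Fin n) (Q : MvPolynomial (Fin n) ℂ) :
    mvTranslate ζ (MvPolynomial.pderiv i Q) = MvPolynomial.pderiv i (mvTranslate ζ Q) := by
  induction Q using MvPolynomial.induction_on with
  | C a => simp
  | add p q hp hq => simp [hp, hq]
  | mul_X p j hp =>
    have hX : mvTranslate ζ (MvPolynomial.X j) = MvPolynomial.X j + MvPolynomial.C (ζ j) :=
      MvPolynomial.aeval_X _ j
    simp [hp, hX, MvPolynomial.pderiv_X, Pi.single_apply, apply_ite]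

lemma Dml_mvEval_apply (ℓ : Fin n → ℕ) (Q : MvPolynomial (Fin n) ℂ) (ζ : Fin n → ℂ) :
    Dml ℓ (mvEval Q) ζ =
      (mvTranslate ζ Q).coeff (Finsupp.equivFunOnFinite.symm ℓ) * ∏ i, ((ℓ i).factorial : ℂ) := by
  let D (R : MvPolynomial (Fin n) ℂ) : MvPolynomial (Fin n) ℂ :=
    (List.finRange n).foldr (fun i R => (MvPolynomial.pderiv i)^[ℓ i] R) R
  have hD_eval : Dml ℓ (mvEval Q) = mvEval (D Q) :=
    List.foldr_hom mvEval fun i R =>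
      (Function.Semiconj.iterate_right (fun R => (pd_mvEval i R).symm) (ℓ i) R).symm
  have hD_translate : mvTranslate ζ (D Q) = D (mvTranslate ζ Q) :=
    (List.foldr_hom (mvTranslate ζ) fun i R =>
      (Function.Semiconj.iterate_right (mvTranslate_pderiv ζ i) (ℓ i) R).symm).symm
  have hexponent : ((List.finRange n).map fun i => Finsupp.single i (ℓ i)).sum =
      Finsupp.equivFunOnFinite.symm ℓ := by
    rw [← List.ofFn_eq_map, List.sum_ofFn, Finsupp.equivFunOnFinite_symm_eq_sum]
  calc Dml ℓ (mvEval Q) ζ = mvEval (D (mvTranslate ζ Q)) 0 := by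
        rw [hD_eval, ← hD_translate, mvEval_mvTranslate, zero_add]
    _ = (D (mvTranslate ζ Q)).coeff 0 := by
        rw [mvEval, MvPolynomial.eval_zero, MvPolynomial.constantCoeff_eq]
    _ = _ := by
        rw [coeff_foldr_iterate_pderiv ℓ (List.nodup_finRange n) (by simp), zero_add, hexponent,
          ← List.ofFn_eq_map, List.prod_ofFn]

lemma eventually_pSum_mvEval_eq {Nj : ℕ → Fin n → ℕ} (hNj : Function.Bijective Nj)
    (ζ : Fin n → ℂ) (Q : MvPolynomial (Fin n) ℂ) :
    ∀ᶠ lam in atTop, pSum Nj (mvEval Q) ζ lam = mvEval Q := by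
  let e : ℕ ≃ (Fin n →₀ ℕ) := (Equiv.ofBijective Nj hNj).trans Finsupp.equivFunOnFinite.symm
  let R := mvTranslate ζ Q
  filter_upwards [(Filter.tendsto_finset_range.comp (tendsto_add_atTop_nat 1)).eventually_ge_atTop
    (R.support.map e.symm.toEmbedding)] with lam hlam
  have hterm : ∀ (z : Fin n → ℂ) (j : ℕ), ((∏ i, (Nj j i).factorial : ℕ) : ℂ)⁻¹ *
      Dml (Nj j) (mvEval Q) ζ * ∏ i, (z i - ζ i) ^ Nj j i =
        R.coeff (e j) * ∏ i, (z i - ζ i) ^ e j i := by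
    intro z j
    have hfactorial : (∏ i, ((Nj j i).factorial : ℂ)) ≠ 0 :=
      Finset.prod_ne_zero_iff.2 fun i _ => Nat.cast_ne_zero.2 (Nat.factorial_ne_zero _)
    rw [Dml_mvEval_apply, Nat.cast_prod, mul_comm (MvPolynomial.coeff _ _),
      inv_mul_cancel_left₀ hfactorial]
    rfl
  funext z
  calc pSum Nj (mvEval Q) ζ lam z
      = ∑ j ∈ Finset.range (lam + 1), R.coeff (e j) * ∏ i, (z i - ζ i) ^ e j i := by
        simp only [pSum, pSumExt, hterm]
    _ = ∑ j ∈ R.support.map e.symm.toEmbedding, R.coeff (e j) * ∏ i, (z i - ζ i) ^ e j i := by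
        refine (Finset.sum_subset hlam fun j _ hj => ?_).symm
        have hcoeff : R.coeff (e j) = 0 := by simpa using hj
        rw [hcoeff, zero_mul]
    _ = mvEval R (z - ζ) := by simp [mvEval, MvPolynomial.eval_eq']
    _ = mvEval Q z := by rw [mvEval_mvTranslate, sub_add_cancel]

end TaylorSums

lemma tendsto_continuousMap_iff_forall_tendstoUniformlyOn {X Y ι : Type*}
    [TopologicalSpace X] [UniformSpace Y]
    {s : Set X} {p : Filter ι} {F : ι → C(s, Y)} {g : C(s, Y)} {F' : ι → X → Y} {g' : X → Y}
    (hF : ∀ i x, F i x = F' i x) (hg : ∀ x, g x = g' x) :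
    Tendsto F p (𝓝 g) ↔ ∀ L ⊆ s, IsCompact L → TendstoUniformlyOn F' g' p L := by
  rw [ContinuousMap.tendsto_iff_forall_isCompact_tendstoUniformlyOn]
  refine ⟨fun h L hLs hL => ?_, fun h L hL => ?_⟩
  · intro u hu
    filter_upwards [h _ (Topology.IsInducing.subtypeVal.isCompact_preimage_iff
      (by simpa using hLs) |>.2 hL) u hu] with i hi x hx
    simpa only [hF, hg] using hi ⟨x, hLs hx⟩ hx
  · intro u hu
    filter_upwards [h _ (Subtype.coe_image_subset s L) (hL.image continuous_subtype_val) u hu]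
      with i hi x hx
    simpa only [hF, hg] using hi x (mem_image_of_mem _ hx)

lemma baireSpace_of_isInducing_of_isClosed_range {X Y : Type*} [TopologicalSpace X]
    [UniformSpace Y] [CompleteSpace Y] [(uniformity Y).IsCountablyGenerated] {φ : X → Y}
    (hφ : IsInducing φ) (hrange : IsClosed (range φ)) : BaireSpace X := by
  let _ : UniformSpace X := (UniformSpace.comap φ inferInstance).replaceTopology hφ.eq_induced
  have hunif : IsUniformInducing φ := ⟨rfl⟩
  have : CompleteSpace X := hunif.completeSpace hrange.isComplete
  have : (uniformity X).IsCountablyGenerated := hunif.comap_uniformity ▸ inferInstance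
  infer_instance

section HolomorphicFunctions

variable {n : ℕ} {Ω : Set (Fin n → ℂ)}

namespace Ospace

/-- The restriction to `Ω` of an element of `O(Ω)`; the topology of `O(Ω)` is induced by it. -/
def toContinuousMap (f : Ospace n Ω) : C(Ω, ℂ) :=
  ⟨Ω.domRestrict f.1, continuousOn_iff_continuous_domRestrict.mp f.2.continuousOn⟩

lemma toContinuousMap_apply (f : Ospace n Ω) (z : Ω) : f.toContinuousMap z = f.1 z := rfl

lemma isInducing_toContinuousMap : IsInducing (toContinuousMap : Ospace n Ω → C(Ω, ℂ)) := ⟨rfl⟩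

lemma tendsto_toContinuousMap_iff (hΩ : IsOpen Ω) {ι : Type*} {l : Filter ι}
    {F : ι → Ospace n Ω} {G : C(Ω, ℂ)} {g : (Fin n → ℂ) → ℂ} (hg : ∀ z, G z = g z) :
    Tendsto (fun i => (F i).toContinuousMap) l (𝓝 G) ↔
      TendstoLocallyUniformlyOn (fun i => (F i).1) g l Ω := by
  rw [tendstoLocallyUniformlyOn_iff_forall_isCompact hΩ]
  exact tendsto_continuousMap_iff_forall_tendstoUniformlyOn (fun _ _ => rfl) hg

lemma isClosed_range_toContinuousMap (hΩ : IsOpen Ω) :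
    IsClosed (range (toContinuousMap : Ospace n Ω → C(Ω, ℂ))) := by
  refine isClosed_of_closure_subset fun g hg => ?_
  have : (comap (toContinuousMap : Ospace n Ω → C(Ω, ℂ)) (𝓝 g)).NeBot :=
    comap_neBot_iff_frequently.2 (mem_closure_iff_frequently.1 hg)
  let G : (Fin n → ℂ) → ℂ := Function.extend Subtype.val g 0
  have hG (z : Ω) : g z = G z := (Subtype.val_injective.extend_apply _ _ _).symm
  have hlim := (tendsto_toContinuousMap_iff hΩ hG).1
    (tendsto_comap (f := (toContinuousMap : Ospace n Ω → C(Ω, ℂ))))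
  have hGd : DifferentiableOn ℂ G Ω :=
    (differentiableOn_and_tendstoLocallyUniformlyOn_fderiv hΩ hlim (.of_forall fun f => f.2)).1
  exact ⟨⟨G, hGd⟩, ContinuousMap.ext fun z => (hG z).symm⟩

lemma baireSpace (hΩ : IsOpen Ω) : BaireSpace (Ospace n Ω) :=
  have := hΩ.locallyCompactSpace
  baireSpace_of_isInducing_of_isClosed_range isInducing_toContinuousMap
    (isClosed_range_toContinuousMap hΩ)

end Ospace

lemma tendstoLocallyUniformlyOn_pd (hΩ : IsOpen Ω) (i : Fin n) {ι : Type*} {l : Filter ι}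
    [l.NeBot] {F : ι → (Fin n → ℂ) → ℂ} {f : (Fin n → ℂ) → ℂ}
    (hF : ∀ k, DifferentiableOn ℂ (F k) Ω) (h : TendstoLocallyUniformlyOn F f l Ω) :
    TendstoLocallyUniformlyOn (fun k => pd i (F k)) (pd i f) l Ω :=
  (ContinuousLinearMap.apply ℂ ℂ (Pi.single i 1)).uniformContinuous.comp_tendstoLocallyUniformlyOn
    (differentiableOn_and_tendstoLocallyUniformlyOn_fderiv hΩ h (.of_forall hF)).2

lemma tendstoLocallyUniformlyOn_Dml (hΩ : IsOpen Ω) (ℓ : Fin n → ℕ) {ι : Type*} {l : Filter ι}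
    [l.NeBot] {F : ι → (Fin n → ℂ) → ℂ} {f : (Fin n → ℂ) → ℂ}
    (hF : ∀ k, DifferentiableOn ℂ (F k) Ω) (h : TendstoLocallyUniformlyOn F f l Ω) :
    TendstoLocallyUniformlyOn (fun k => Dml ℓ (F k)) (Dml ℓ f) l Ω := by
  suffices hind : ∀ s : List (Fin n),
      let D := fun g => s.foldr (fun i g => (pd i)^[ℓ i] g) g
      (∀ k, DifferentiableOn ℂ (D (F k)) Ω) ∧ TendstoLocallyUniformlyOn (D ∘ F) (D f) l Ω from
    (hind _).2
  intro s
  induction s with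
  | nil => exact ⟨hF, h⟩
  | cons i s ih =>
    simp only [List.foldr_cons]
    induction ℓ i with
    | zero => exact ih
    | succ m ih =>
      simp only [Function.iterate_succ_apply']
      exact ⟨fun k => differentiableOn_fderiv_apply hΩ (ih.1 k) _,
        tendstoLocallyUniformlyOn_pd hΩ i ih.1 ih.2⟩

lemma continuous_Dml_apply (hΩ : IsOpen Ω) {ζ : Fin n → ℂ} (hζ : ζ ∈ Ω) (ℓ : Fin n → ℕ) :
    Continuous fun f : Ospace n Ω => Dml ℓ f.1 ζ :=
  continuous_iff_continuousAt.2 fun f =>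
    (tendstoLocallyUniformlyOn_Dml hΩ ℓ (fun g : Ospace n Ω => g.2)
      ((Ospace.tendsto_toContinuousMap_iff hΩ f.toContinuousMap_apply).1
        (Ospace.isInducing_toContinuousMap.continuous.tendsto f))).tendsto_at hζ

/-- The Taylor sum `S_λ(f, ζ)` of an element of `O(Ω)`, as a continuous function on `ℂⁿ`. -/
def taylorSum (Nj : ℕ → Fin n → ℕ) (ζ : Fin n → ℂ) (lam : ℕ) (f : Ospace n Ω) :
    C(Fin n → ℂ, ℂ) :=
  ⟨pSum Nj f.1 ζ lam, by unfold pSum pSumExt; fun_prop⟩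

lemma continuous_taylorSum (hΩ : IsOpen Ω) {ζ : Fin n → ℂ} (hζ : ζ ∈ Ω) (Nj : ℕ → Fin n → ℕ)
    (lam : ℕ) : Continuous (taylorSum Nj ζ lam : Ospace n Ω → C(Fin n → ℂ, ℂ)) := by
  have hcoeff (j : ℕ) : Continuous fun p : Ospace n Ω × (Fin n → ℂ) => Dml (Nj j) p.1.1 ζ :=
    (continuous_Dml_apply hΩ hζ (Nj j)).comp continuous_fst
  refine ContinuousMap.continuous_of_continuous_uncurry _ ?_
  change Continuous fun p : Ospace n Ω × (Fin n → ℂ) => pSum Nj p.1.1 ζ lam p.2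
  unfold pSum pSumExt
  fun_prop

/-- The restrictions to `K` and to `Ω` of the Taylor sum `S_λ(f, ζ)`. -/
def taylorRestrict (Nj : ℕ → Fin n → ℕ) (ζ : Fin n → ℂ) (K : Set (Fin n → ℂ)) (lam : ℕ)
    (f : Ospace n Ω) : C(K, ℂ) × C(Ω, ℂ) :=
  ((taylorSum Nj ζ lam f).restrict K, (taylorSum Nj ζ lam f).restrict Ω)

lemma continuous_taylorRestrict (hΩ : IsOpen Ω) {ζ : Fin n → ℂ} (hζ : ζ ∈ Ω)
    (Nj : ℕ → Fin n → ℕ) (K : Set (Fin n → ℂ)) (lam : ℕ) :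
    Continuous (taylorRestrict Nj ζ K lam : Ospace n Ω → C(K, ℂ) × C(Ω, ℂ)) :=
  have hsum := continuous_taylorSum hΩ hζ Nj lam
  ((ContinuousMap.continuous_restrict K).comp hsum).prodMk
    ((ContinuousMap.continuous_restrict Ω).comp hsum)

end HolomorphicFunctions

section UniversalityCriterion

lemma setOf_mem_closure_range_eq_iInter {ι Y Z : Type*} [PseudoMetricSpace Z] (T : ι → Y → Z)
    (g : Y → Z) : {y | g y ∈ closure (range fun i => T i y)} =
      ⋂ k : ℕ, ⋃ i, {y | dist (g y) (T i y) < 1 / ((k : ℝ) + 1)} := by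
  ext y
  simp [Metric.mem_closure_range_iff_nat]

variable {ι Y Z : Type*} [TopologicalSpace Y] [TopologicalSpace Z]
  [TopologicalSpace.PseudoMetrizableSpace Z] {T : ι → Y → Z} {g : Y → Z}

lemma isGδ_setOf_mem_closure_range (hT : ∀ i, Continuous (T i)) (hg : Continuous g) :
    IsGδ {y | g y ∈ closure (range fun i => T i y)} := by
  let _ := TopologicalSpace.pseudoMetrizableSpacePseudoMetric Z
  rw [setOf_mem_closure_range_eq_iInter]
  exact .iInter_of_isOpen fun k => isOpen_iUnion fun i =>
    isOpen_lt (hg.dist (hT i)) continuous_const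

lemma dense_setOf_mem_closure_range [BaireSpace Y] (hT : ∀ i, Continuous (T i))
    (hg : Continuous g) (h : ∀ y, (y, g y) ∈ closure (⋃ i, range fun y' => (y', T i y'))) :
    Dense {y | g y ∈ closure (range fun i => T i y)} := by
  let _ := TopologicalSpace.pseudoMetrizableSpacePseudoMetric Z
  rw [setOf_mem_closure_range_eq_iInter]
  refine dense_iInter_of_isOpen (fun k => isOpen_iUnion fun i =>
    isOpen_lt (hg.dist (hT i)) continuous_const) fun k y => mem_closure_iff.2 fun U hU hyU => ?_
  have hopen : IsOpen {p : Y × Z | p.1 ∈ U ∧ dist (g p.1) p.2 < 1 / ((k : ℝ) + 1)} :=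
    (hU.preimage continuous_fst).inter
      (isOpen_lt ((hg.comp continuous_fst).dist continuous_snd) continuous_const)
  obtain ⟨p, ⟨hpU, hp⟩, hpT⟩ := mem_closure_iff.1 (h y) _ hopen
    ⟨hyU, (dist_self (g y)).trans_lt Nat.one_div_pos_of_nat⟩
  obtain ⟨i, y', rfl⟩ := mem_iUnion.1 hpT
  exact ⟨y', hpU, mem_iUnion.2 ⟨i, hp⟩⟩

end UniversalityCriterion

section UniversalTaylorSeries

variable {n : ℕ} {Ω K : Set (Fin n → ℂ)} {𝕄 : Set ℕ} {Nj : ℕ → Fin n → ℕ} {ζ : Fin n → ℂ}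

/-- `f ∈ O(Ω)` is universal on `K` when every polynomial is a uniform limit on `K` of Taylor sums
`S_λ(f, ζ)`, `λ ∈ 𝕄`, which at the same time converge to `f` in `O(Ω)`. -/
def IsUniversalOn (𝕄 : Set ℕ) (Nj : ℕ → Fin n → ℕ) (ζ : Fin n → ℂ) (K : Set (Fin n → ℂ))
    (f : Ospace n Ω) : Prop :=
  ∀ P : MvPolynomial (Fin n) ℂ, ∃ lam : ℕ → ℕ, (∀ N, lam N ∈ 𝕄) ∧
    TendstoUniformlyOn (fun N => pSum Nj f.1 ζ (lam N)) (mvEval P) atTop K ∧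
    ∀ L : Set (Fin n → ℂ), L ⊆ Ω → IsCompact L →
      TendstoUniformlyOn (fun N => pSum Nj f.1 ζ (lam N)) f.1 atTop L

lemma IsUniversalOn.mono {K' : Set (Fin n → ℂ)} {f : Ospace n Ω}
    (hf : IsUniversalOn 𝕄 Nj ζ K f) (hK' : K' ⊆ K) : IsUniversalOn 𝕄 Nj ζ K' f := fun P =>
  let ⟨lam, hlam, hP, hL⟩ := hf P
  ⟨lam, hlam, hP.mono hK', hL⟩

lemma tendsto_taylorRestrict_iff (hK : IsCompact K) {f : Ospace n Ω} {lam : ℕ → ℕ}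
    {P : MvPolynomial (Fin n) ℂ} :
    Tendsto (fun N => taylorRestrict Nj ζ K (lam N) f) atTop
        (𝓝 (polyRestrict K P, f.toContinuousMap)) ↔
      TendstoUniformlyOn (fun N => pSum Nj f.1 ζ (lam N)) (mvEval P) atTop K ∧
      ∀ L : Set (Fin n → ℂ), L ⊆ Ω → IsCompact L →
        TendstoUniformlyOn (fun N => pSum Nj f.1 ζ (lam N)) f.1 atTop L := by
  have hsum {A : Set (Fin n → ℂ)} (N : ℕ) (z : A) :
      (taylorSum Nj ζ (lam N) f).restrict A z = pSum Nj f.1 ζ (lam N) z := rfl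
  have hlim_K : Tendsto (fun N => (taylorSum Nj ζ (lam N) f).restrict K) atTop
      (𝓝 (polyRestrict K P)) ↔
        TendstoUniformlyOn (fun N => pSum Nj f.1 ζ (lam N)) (mvEval P) atTop K :=
    (tendsto_continuousMap_iff_forall_tendstoUniformlyOn hsum (polyRestrict_apply P)).trans
      ⟨fun h => h K subset_rfl hK, fun h L hL _ => h.mono hL⟩
  exact (Prod.tendsto_iff _ _).trans (and_congr hlim_K
    (tendsto_continuousMap_iff_forall_tendstoUniformlyOn hsum f.toContinuousMap_apply))

lemma isUniversalOn_iff_forall_mem_closure (hΩ : IsOpen Ω) (hK : IsCompact K) {f : Ospace n Ω} :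
    IsUniversalOn 𝕄 Nj ζ K f ↔ ∀ P, (polyRestrict K P, f.toContinuousMap) ∈
      closure (range fun lam : 𝕄 => taylorRestrict Nj ζ K lam f) := by
  have := hΩ.locallyCompactSpace
  have := isCompact_iff_compactSpace.1 hK
  refine forall_congr' fun P => ?_
  rw [mem_closure_iff_seq_limit]
  constructor
  · rintro ⟨lam, hlam, h⟩
    exact ⟨_, fun N => ⟨⟨lam N, hlam N⟩, rfl⟩, (tendsto_taylorRestrict_iff hK).2 h⟩
  · rintro ⟨x, hx, hlim⟩
    choose lam hlam using hx
    obtain rfl := funext hlam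
    exact ⟨fun N => lam N, fun N => (lam N).2, (tendsto_taylorRestrict_iff hK).1 hlim⟩

variable (𝕄 Nj ζ) in
lemma exists_seq_isUniversalOn_iff (hΩ : IsOpen Ω) (hK : IsCompact K) :
    ∃ P : ℕ → MvPolynomial (Fin n) ℂ, ∀ f : Ospace n Ω, IsUniversalOn 𝕄 Nj ζ K f ↔
      ∀ k, (polyRestrict K (P k), f.toContinuousMap) ∈
        closure (range fun lam : 𝕄 => taylorRestrict Nj ζ K lam f) := by
  have := isCompact_iff_compactSpace.1 hK
  choose P hP using fun k => (TopologicalSpace.denseSeq (polyRestrict K).range k).2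
  refine ⟨P, fun f => (isUniversalOn_iff_forall_mem_closure hΩ hK).trans
    ⟨fun h k => h (P k), fun h Q => ?_⟩⟩
  have hclosed : IsClosed {h : (polyRestrict K).range | (h.1, f.toContinuousMap) ∈
      closure (range fun lam : 𝕄 => taylorRestrict Nj ζ K lam f)} :=
    isClosed_closure.preimage (by fun_prop)
  refine (TopologicalSpace.denseRange_denseSeq (polyRestrict K).range).induction_on
    (p := fun h => (h.1, f.toContinuousMap) ∈ _) ⟨_, Q, rfl⟩ hclosed fun k => ?_
  exact hP k ▸ h k

lemma isGδ_setOf_isUniversalOn (hΩ : IsOpen Ω) (hζ : ζ ∈ Ω) (hK : IsCompact K) :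
    IsGδ {f : Ospace n Ω | IsUniversalOn 𝕄 Nj ζ K f} := by
  have := hΩ.locallyCompactSpace
  have := isCompact_iff_compactSpace.1 hK
  obtain ⟨P, hP⟩ := exists_seq_isUniversalOn_iff 𝕄 Nj ζ hΩ hK
  simp only [hP, ofPred_forall]
  exact .iInter fun k => isGδ_setOf_mem_closure_range
    (fun lam => continuous_taylorRestrict hΩ hζ Nj K lam)
    (continuous_const.prodMk Ospace.isInducing_toContinuousMap.continuous)

lemma mem_closure_range_polyRestrict_prod (hK : IsCompact K) (hKc : Convex ℝ K)
    (hΩo : IsOpen Ω) (hΩ : Convex ℝ Ω) (hKΩ : Disjoint K Ω) (P : MvPolynomial (Fin n) ℂ)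
    (f : Ospace n Ω) : (polyRestrict K P, f.toContinuousMap) ∈
      closure (range fun Q => (polyRestrict K Q, polyRestrict Ω Q)) := by
  have := isCompact_iff_compactSpace.1 hK
  refine (mem_closure_iff_nhds_basis (Metric.nhds_basis_ball.prod_nhds
    (nhds_basis_uniformity Metric.uniformity_basis_dist.compactConvergenceUniformity))).2 ?_
  rintro ⟨ε, L, δ⟩ ⟨hε, hL, hδ⟩
  obtain ⟨Q, hQK, hQL⟩ := exists_mvEval_dist_lt_of_disjoint_convex hK hKc hΩo hΩ hKΩ
    (hL.image continuous_subtype_val) (Subtype.coe_image_subset Ω L) P f.2 (lt_min hε hδ)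
  refine ⟨_, ⟨Q, rfl⟩, (ContinuousMap.dist_lt_iff hε).2 fun z => ?_, fun z hz => ?_⟩
  · simpa only [polyRestrict_apply] using (hQK z z.2).trans_le (min_le_left _ _)
  · simpa only [mem_ofPred_eq, polyRestrict_apply, Ospace.toContinuousMap_apply] using
      (hQL z (mem_image_of_mem _ hz)).trans_le (min_le_right _ _)

/-- A polynomial as an element of `O(Ω)`. -/
def Ospace.ofMvPolynomial (Ω : Set (Fin n → ℂ)) (Q : MvPolynomial (Fin n) ℂ) : Ospace n Ω :=
  ⟨mvEval Q, (differentiable_mvEval Q).differentiableOn⟩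

lemma Ospace.toContinuousMap_ofMvPolynomial (Q : MvPolynomial (Fin n) ℂ) :
    (ofMvPolynomial Ω Q).toContinuousMap = polyRestrict Ω Q :=
  ContinuousMap.ext fun z => (polyRestrict_apply Q z).symm

lemma exists_taylorRestrict_ofMvPolynomial (h𝕄 : 𝕄.Infinite) (hNj : Function.Bijective Nj)
    (ζ : Fin n → ℂ) (Q : MvPolynomial (Fin n) ℂ) :
    ∃ lam ∈ 𝕄, taylorRestrict Nj ζ K lam (.ofMvPolynomial Ω Q) =
      (polyRestrict K Q, polyRestrict Ω Q) := by
  obtain ⟨lam, hlam, hsum⟩ := ((Nat.frequently_atTop_iff_infinite.2 h𝕄).and_eventually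
    (eventually_pSum_mvEval_eq hNj ζ Q)).exists
  have htaylor : ∀ z, taylorSum Nj ζ lam (.ofMvPolynomial Ω Q) z = mvEval Q z := congrFun hsum
  refine ⟨lam, hlam, Prod.ext (ContinuousMap.ext fun z => ?_) (ContinuousMap.ext fun z => ?_)⟩
  all_goals exact (htaylor z).trans (polyRestrict_apply Q z).symm

lemma dense_setOf_isUniversalOn (h𝕄 : 𝕄.Infinite) (hNj : Function.Bijective Nj)
    (hΩo : IsOpen Ω) (hΩ : Convex ℝ Ω) (hζ : ζ ∈ Ω) (hK : IsCompact K) (hKc : Convex ℝ K)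
    (hKΩ : Disjoint K Ω) : Dense {f : Ospace n Ω | IsUniversalOn 𝕄 Nj ζ K f} := by
  have := hΩo.locallyCompactSpace
  have := isCompact_iff_compactSpace.1 hK
  have := Ospace.baireSpace hΩo
  obtain ⟨P, hP⟩ := exists_seq_isUniversalOn_iff 𝕄 Nj ζ hΩo hK
  have hT (lam : 𝕄) := continuous_taylorRestrict hΩo hζ Nj K lam
  have hg (k : ℕ) : Continuous fun f : Ospace n Ω => (polyRestrict K (P k), f.toContinuousMap) :=
    continuous_const.prodMk Ospace.isInducing_toContinuousMap.continuous
  simp only [hP, ofPred_forall]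
  refine dense_iInter_of_Gδ (fun k => isGδ_setOf_mem_closure_range hT (hg k))
    fun k => dense_setOf_mem_closure_range hT (hg k) fun f => ?_
  let Φ (Q : MvPolynomial (Fin n) ℂ) := (polyRestrict K Q, polyRestrict Ω Q)
  let l := comap Φ (𝓝 (polyRestrict K (P k), f.toContinuousMap))
  have : l.NeBot := comap_neBot_iff_frequently.2 <| mem_closure_iff_frequently.1 <|
    mem_closure_range_polyRestrict_prod hK hKc hΩo hΩ hKΩ (P k) f
  have hΦ : Tendsto Φ l (𝓝 (polyRestrict K (P k), f.toContinuousMap)) := tendsto_comap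
  have hpoly : Tendsto (Ospace.ofMvPolynomial Ω) l (𝓝 f) :=
    Ospace.isInducing_toContinuousMap.tendsto_nhds_iff.2 <| by
      simpa only [Function.comp_def, Ospace.toContinuousMap_ofMvPolynomial] using hΦ.snd_nhds
  refine mem_closure_of_tendsto (hpoly.prodMk_nhds hΦ) (.of_forall fun Q => ?_)
  obtain ⟨lam, hlam, hsum⟩ := exists_taylorRestrict_ofMvPolynomial h𝕄 hNj ζ Q
  exact mem_iUnion.2 ⟨⟨lam, hlam⟩, _, Prod.ext rfl hsum⟩

end UniversalTaylorSeries

lemma exists_finset_subset_sUnion_subset_of_isCompact {X : Type*} [TopologicalSpace X]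
    {b : Set (Set X)} (hb : TopologicalSpace.IsTopologicalBasis b) {K U : Set X}
    (hK : IsCompact K) (hU : IsOpen U) (hKU : K ⊆ U) :
    ∃ c ⊆ b, c.Finite ∧ K ⊆ ⋃₀ c ∧ ⋃₀ c ⊆ U := by
  obtain ⟨c, hcb, hc, hKc⟩ := hK.elim_finite_subcover_image (b := {s ∈ b | s ⊆ U}) (c := id)
    (fun s hs => hb.isOpen hs.1) fun x hx => by
      obtain ⟨s, hs, hxs, hsU⟩ := hb.exists_subset_of_mem_open (hKU hx) hU
      exact mem_biUnion (show s ∈ {s ∈ b | s ⊆ U} from ⟨hs, hsU⟩) hxs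
  exact ⟨c, fun s hs => (hcb hs).1, hc, by simpa [sUnion_eq_biUnion] using hKc,
    sUnion_subset fun s hs => (hcb hs).2⟩

lemma exists_countable_isCompact_convex_cofinal {E : Type*} [NormedAddCommGroup E]
    [NormedSpace ℝ E] [ProperSpace E] {G : Set E} (hG : IsOpen G) :
    ∃ 𝒲 : Set (Set E), 𝒲.Countable ∧ (∀ W ∈ 𝒲, IsCompact W ∧ Convex ℝ W ∧ W ⊆ G) ∧
      ∀ K, IsCompact K → Convex ℝ K → K ⊆ G → ∃ W ∈ 𝒲, K ⊆ W := by
  let b := TopologicalSpace.countableBasis E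
  let hull (c : Set (Set E)) : Set E := closedConvexHull ℝ (⋃₀ c)
  refine ⟨{W ∈ hull '' {c | c.Finite ∧ c ⊆ b} | IsCompact W ∧ Convex ℝ W ∧ W ⊆ G},
    ((countable_ofPred_finite_subset (TopologicalSpace.countable_countableBasis E)).image
      hull).mono (sep_subset _ _), fun W hW => hW.2, fun K hK hKc hKG => ?_⟩
  obtain ⟨δ, hδ, hδG⟩ := hK.exists_cthickening_subset_open hG hKG
  obtain ⟨c, hcb, hc, hKc', hcδ⟩ := exists_finset_subset_sUnion_subset_of_isCompact
    (TopologicalSpace.isBasis_countableBasis E) hK Metric.isOpen_thickening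
    (Metric.self_subset_thickening hδ K)
  have hhull : hull c ⊆ Metric.cthickening δ K :=
    closedConvexHull_min (hcδ.trans (Metric.thickening_subset_cthickening δ K))
      (hKc.cthickening δ) Metric.isClosed_cthickening
  exact ⟨hull c, ⟨⟨c, ⟨hc, hcb⟩, rfl⟩, hK.cthickening.of_isClosed_subset isClosed_closedConvexHull
    hhull, convex_closedConvexHull, hhull.trans hδG⟩, hKc'.trans subset_closedConvexHull⟩

lemma exists_countable_isCompact_convex_cofinal_union_range {E ι : Type*} [NormedAddCommGroup E]
    [NormedSpace ℝ E] [ProperSpace E] [Countable ι] {F : Set E} (hF : IsClosed F)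
    {C : ι → Set E} (hC : ∀ m, IsCompact (C m) ∧ Convex ℝ (C m)) :
    ∃ 𝒮 : Set (Set E), 𝒮.Countable ∧
      (∀ W ∈ 𝒮, IsCompact W ∧ Convex ℝ W ∧ (W ∩ F = ∅ ∨ ∃ m, W = C m)) ∧
      ∀ K, IsCompact K → Convex ℝ K → (K ∩ F = ∅ ∨ ∃ m, K = C m) → ∃ W ∈ 𝒮, K ⊆ W := by
  obtain ⟨𝒲, h𝒲, h𝒲F, hcofinal⟩ := exists_countable_isCompact_convex_cofinal hF.isOpen_compl
  refine ⟨𝒲 ∪ range C, h𝒲.union (countable_range C), ?_, ?_⟩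
  · rintro W (hW | ⟨m, rfl⟩)
    · obtain ⟨hWk, hWc, hWF⟩ := h𝒲F W hW
      exact ⟨hWk, hWc, .inl ((subset_compl_iff_disjoint_right.1 hWF).inter_eq)⟩
    · exact ⟨(hC m).1, (hC m).2, .inr ⟨m, rfl⟩⟩
  · rintro K hK hKc (hKF | ⟨m, rfl⟩)
    · obtain ⟨W, hW, hKW⟩ := hcofinal K hK hKc
        (subset_compl_iff_disjoint_right.2 (disjoint_iff_inter_eq_empty.2 hKF))
      exact ⟨W, .inl hW, hKW⟩
    · exact ⟨C m, .inr ⟨m, rfl⟩, subset_rfl⟩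

/-- Theorem 2.5: universal Taylor series in `O(Ω)` simultaneously for all
compact convex sets disjoint from the closure of `Ω` and for the members of a given
sequence `(K_m)` of compact convex sets disjoint from `Ω`. -/
theorem thm2_5 (n : ℕ) (𝕄 : Set ℕ) (h𝕄 : 𝕄.Infinite)
    (Ω : Set (Fin n → ℂ)) (hΩo : IsOpen Ω) (hΩcv : Convex ℝ Ω)
    (Km : ℕ → Set (Fin n → ℂ))
    (hKm : ∀ m, IsCompact (Km m) ∧ Convex ℝ (Km m) ∧ Km m ∩ Ω = ∅)
    (ζ : Fin n → ℂ) (hζ : ζ ∈ Ω)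
    (Nj : ℕ → Fin n → ℕ) (hNj : Function.Bijective Nj) :
    ∃ U : Set (Ospace n Ω),
      U = {f : Ospace n Ω |
        ∀ K : Set (Fin n → ℂ), IsCompact K → Convex ℝ K →
          (K ∩ closure Ω = ∅ ∨ ∃ m, K = Km m) →
          ∀ P : MvPolynomial (Fin n) ℂ, ∃ lam : ℕ → ℕ, (∀ N, lam N ∈ 𝕄) ∧
            TendstoUniformlyOn (fun N => pSum Nj f.1 ζ (lam N)) (mvEval P) atTop K ∧
            ∀ L : Set (Fin n → ℂ), L ⊆ Ω → IsCompact L →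
              TendstoUniformlyOn (fun N => pSum Nj f.1 ζ (lam N)) f.1 atTop L} ∧
      U.Nonempty ∧ Dense U ∧ IsGδ U := by
  obtain ⟨𝒮, h𝒮, h𝒮K, hcofinal⟩ := exists_countable_isCompact_convex_cofinal_union_range
    (isClosed_closure (s := Ω)) fun m => ⟨(hKm m).1, (hKm m).2.1⟩
  have h𝒮Ω : ∀ W ∈ 𝒮, Disjoint W Ω := fun W hW => (h𝒮K W hW).2.2.elim
    (fun h => (disjoint_iff_inter_eq_empty.2 h).mono_right subset_closure)
    fun ⟨m, h⟩ => h ▸ disjoint_iff_inter_eq_empty.2 (hKm m).2.2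
  have := Ospace.baireSpace hΩo
  have hGδ : ∀ W ∈ 𝒮, IsGδ {f : Ospace n Ω | IsUniversalOn 𝕄 Nj ζ W f} := fun W hW =>
    isGδ_setOf_isUniversalOn hΩo hζ (h𝒮K W hW).1
  have hdense : Dense (⋂ W ∈ 𝒮, {f : Ospace n Ω | IsUniversalOn 𝕄 Nj ζ W f}) :=
    dense_biInter_of_Gδ hGδ h𝒮 fun W hW => dense_setOf_isUniversalOn h𝕄 hNj hΩo hΩcv hζ
      (h𝒮K W hW).1 (h𝒮K W hW).2.1 (h𝒮Ω W hW)
  refine ⟨⋂ W ∈ 𝒮, {f | IsUniversalOn 𝕄 Nj ζ W f}, Subset.antisymm ?_ ?_,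
    hdense.nonempty_iff.2 ⟨.ofMvPolynomial Ω 0⟩, hdense, .biInter h𝒮 hGδ⟩
  · intro f hf K hK hKc hKΩ
    obtain ⟨W, hW, hKW⟩ := hcofinal K hK hKc hKΩ
    exact (mem_iInter₂.1 hf W hW).mono hKW
  · intro f hf
    exact mem_iInter₂.2 fun W hW => hf W (h𝒮K W hW).1 (h𝒮K W hW).2.1 (h𝒮K W hW).2.2

end
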